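/- Let k ≥ 4 be an integer. Then every sequence of n ≥ (k−1)² + 1 distinct real numbers contains a subsequence that is a k-rollercoaster of length at least n/(2(k−1)) − 3k/2 (as a real-number inequality on the length). -/

import Mathlib

/-- `IsRun t i j` says that the contiguous block `t i, t (i+1), …, t j` is a
*run* of the finite sequence `t`: it is strictly increasing or strictly
decreasing, and it is maximal with this property among contiguous blocks. -/
def IsRun {m : ℕ} (t : Fin m → ℝ) (i j : Fin m) : Prop :=
  i ≤ j ∧
  (StrictMonoOn t (Set.Icc i j) ∨ StrictAntiOn t (Set.Icc i j)) ∧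
  ∀ i' j' : Fin m, i' ≤ i → j ≤ j' → (i ≠ i' ∨ j ≠ j') →
    ¬ (StrictMonoOn t (Set.Icc i' j') ∨ StrictAntiOn t (Set.Icc i' j'))

/-- A *rollercoaster* is a finite sequence of distinct real numbers with at
least three terms in which every run has length (`j - i + 1`) at least 3. -/
def IsRollercoaster {m : ℕ} (t : Fin m → ℝ) : Prop :=
  3 ≤ m ∧ Function.Injective t ∧
  ∀ i j : Fin m, IsRun t i j → (i : ℕ) + 2 ≤ (j : ℕ)

/-- For an integer `k ≥ 3`, a *k-rollercoaster* is a finite sequence of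
distinct real numbers with at least `k` terms in which every run has length
at least `k`. -/
def IsKRollercoaster (k : ℕ) {m : ℕ} (t : Fin m → ℝ) : Prop :=
  k ≤ m ∧ Function.Injective t ∧
  ∀ i j : Fin m, IsRun t i j → k ≤ (j : ℕ) - (i : ℕ) + 1

open Set

/-- `MonotoneBlock t a b`: the block `t a, …, t b` is strictly increasing or strictly
decreasing. -/
def MonotoneBlock (t : ℕ → ℝ) (a b : ℕ) : Prop :=
  StrictMonoOn t (Icc a b) ∨ StrictAntiOn t (Icc a b)

/-- Among the first `m` terms of `t`, any two consecutive ones lie in a common strictly monotone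
block of length at least `k`. -/
def CoveredByBlocks (k m : ℕ) (t : ℕ → ℝ) : Prop :=
  ∀ i, i + 1 < m → ∃ a b, a ≤ i ∧ i + 1 ≤ b ∧ b < m ∧ a + k ≤ b + 1 ∧ MonotoneBlock t a b

/-- The first `N` terms of `s` have a subsequence of length `m` which is covered by strictly
monotone blocks of length at least `k`, and which is empty or ends with a strictly decreasing
block of length `k`. -/
def HasDescendingEnd (s : ℕ → ℝ) (k N m : ℕ) : Prop :=
  ∃ f : ℕ → ℕ, StrictMonoOn f (Iio m) ∧ (∀ i < m, f i < N) ∧ CoveredByBlocks k m (s ∘ f) ∧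
    (m = 0 ∨ k ≤ m ∧ StrictAntiOn (s ∘ f) (Icc (m - k) (m - 1)))

/-- The terms of `s` with index in `[N, N')` have a strictly increasing subsequence of
length `q`. -/
def HasIncreasing (s : ℕ → ℝ) (N N' q : ℕ) : Prop :=
  ∃ A : Finset ℕ, A ⊆ Finset.Ico N N' ∧ A.card = q ∧ StrictMonoOn s A

lemma MonotoneBlock.congr {t u : ℕ → ℝ} {a b : ℕ} (h : MonotoneBlock t a b)
    (htu : EqOn t u (Icc a b)) : MonotoneBlock u a b :=
  h.imp (fun h => h.congr htu) (fun h => h.congr htu)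

lemma hasDescendingEnd_zero (s : ℕ → ℝ) (k N : ℕ) : HasDescendingEnd s k N 0 :=
  ⟨id, by simp [StrictMonoOn], by simp, fun i hi => by omega, Or.inl rfl⟩

lemma HasDescendingEnd.le {s : ℕ → ℝ} {k N m : ℕ} (h : HasDescendingEnd s k N m) (hm : 0 < m) :
    k ≤ m := by
  obtain ⟨f, -, -, -, h | h⟩ := h
  · omega
  · exact h.1

lemma HasIncreasing.mono {s : ℕ → ℝ} {N N₁ N₂ q : ℕ} (h : HasIncreasing s N N₁ q)
    (hN : N₁ ≤ N₂) : HasIncreasing s N N₂ q := by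
  obtain ⟨A, hA, h⟩ := h
  exact ⟨A, hA.trans (Finset.Ico_subset_Ico_right hN), h⟩

lemma HasDescendingEnd.append {s : ℕ → ℝ} {k n N N' m q : ℕ} (hs : InjOn s (Iio n))
    (h : HasDescendingEnd s k N m) (hA : HasIncreasing s N N' q) (hk : 1 ≤ k) (hkq : k ≤ q)
    (hN : N ≤ N') (hn : N' ≤ n) : HasDescendingEnd (-s) k N' (m + q) := by
  obtain ⟨f, hf, hfN, hcov, hend⟩ := h
  obtain ⟨A, hAsub, rfl, hAs⟩ := hA
  obtain ⟨g, hg, hgA⟩ : ∃ g : ℕ → ℕ, StrictMonoOn g (Iio A.card) ∧ ∀ i < A.card, g i ∈ A := by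
    refine ⟨fun i => if h : i < A.card then A.orderEmbOfFin rfl ⟨i, h⟩ else 0, ?_, ?_⟩
    · intro i hi j hj hij
      simp only [mem_Iio] at hi hj
      simpa [hi, hj] using hij
    · intro i hi
      simp [hi]
  have hgN : ∀ i < A.card, N ≤ g i ∧ g i < N' := fun i hi => by
    simpa using hAsub (hgA i hi)
  set F : ℕ → ℕ := fun i => if i < m then f i else g (i - m) with hF
  have hFl : ∀ i < m, F i = f i := fun i hi => by simp [hF, hi]
  have hFr : ∀ i, m ≤ i → F i = g (i - m) := fun i hi => by simp [hF, hi]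
  have hFmono : StrictMonoOn F (Iio (m + A.card)) := by
    intro i hi j hj hij
    simp only [mem_Iio] at hi hj
    rcases lt_or_ge j m with hjm | hjm
    · rw [hFl i (by omega), hFl j hjm]
      exact hf (mem_Iio.2 (by omega)) (mem_Iio.2 hjm) hij
    rcases lt_or_ge i m with him | him
    · rw [hFl i him, hFr j hjm]
      exact (hfN i him).trans_le (hgN _ (by omega)).1
    · rw [hFr i him, hFr j hjm]
      exact hg (mem_Iio.2 (by omega)) (mem_Iio.2 (by omega)) (by omega)
  have hFlt : ∀ i < m + A.card, F i < N' := by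
    intro i hi
    rcases lt_or_ge i m with him | him
    · rw [hFl i him]
      exact (hfN i him).trans_le hN
    · rw [hFr i him]
      exact (hgN _ (by omega)).2
  have hnew : ∀ i j, m ≤ i → i < j → j < m + A.card → s (F i) < s (F j) := by
    intro i j hi hij hj
    rw [hFr i hi, hFr j (by omega)]
    exact hAs (hgA _ (by omega)) (hgA _ (by omega))
      (hg (mem_Iio.2 (by omega)) (mem_Iio.2 (by omega)) (by omega))
  have hneg : ∀ a b, MonotoneBlock (s ∘ F) a b → MonotoneBlock ((-s) ∘ F) a b := by
    rintro a b (h | h)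
    · exact Or.inr h.neg
    · exact Or.inl h.neg
  refine ⟨F, hFmono, hFlt, ?_, Or.inr ⟨by omega, ?_⟩⟩
  · intro i hi
    suffices ∃ a b, a ≤ i ∧ i + 1 ≤ b ∧ b < m + A.card ∧ a + k ≤ b + 1 ∧
        MonotoneBlock (s ∘ F) a b by
      obtain ⟨a, b, h₁, h₂, h₃, h₄, h₅⟩ := this
      exact ⟨a, b, h₁, h₂, h₃, h₄, hneg a b h₅⟩
    rcases lt_trichotomy (i + 1) m with him | him | him
    · obtain ⟨a, b, h₁, h₂, h₃, h₄, h₅⟩ := hcov i him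
      refine ⟨a, b, h₁, h₂, by omega, h₄, h₅.congr fun x hx => ?_⟩
      simp [hFl x (hx.2.trans_lt h₃)]
    · have hne : s (F i) ≠ s (F (i + 1)) := fun h =>
        (hFmono (mem_Iio.2 (by omega)) (mem_Iio.2 hi) (Nat.lt_succ_self i)).ne
          (hs (mem_Iio.2 ((hFlt i (by omega)).trans_le hn))
            (mem_Iio.2 ((hFlt _ hi).trans_le hn)) h)
      rcases hne.lt_or_gt with hlt | hgt
      · refine ⟨i, m + A.card - 1, le_rfl, by omega, by omega, by omega, Or.inl ?_⟩
        intro x hx y hy hxy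
        simp only [mem_Icc] at hx hy
        rcases hx.1.eq_or_lt with rfl | hx'
        · rcases eq_or_ne y (i + 1) with rfl | hy'
          · exact hlt
          · exact hlt.trans (hnew (i + 1) y (by omega) (by omega) (by omega))
        · exact hnew x y (by omega) hxy (by omega)
      · obtain ⟨hkm, hanti⟩ := hend.resolve_left (by omega)
        have hold : ∀ x y, m - k ≤ x → x < y → y ≤ i → s (F y) < s (F x) := by
          intro x y hx hxy hy
          rw [hFl x (by omega), hFl y (by omega)]
          exact hanti (mem_Icc.2 ⟨hx, by omega⟩) (mem_Icc.2 ⟨by omega, by omega⟩) hxy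
        refine ⟨m - k, i + 1, by omega, le_rfl, hi, by omega, Or.inr ?_⟩
        intro x hx y hy hxy
        simp only [mem_Icc] at hx hy
        rcases hy.2.eq_or_lt with rfl | hy'
        · rcases eq_or_ne x i with rfl | hx'
          · exact hgt
          · exact hgt.trans (hold x i (by omega) (by omega) le_rfl)
        · exact hold x y (by omega) hxy (by omega)
    · refine ⟨m, m + A.card - 1, by omega, by omega, by omega, by omega, Or.inl ?_⟩
      intro x hx y hy hxy
      simp only [mem_Icc] at hx hy
      exact hnew x y (by omega) hxy (by omega)
  · intro x hx y hy hxy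
    simp only [mem_Icc] at hx hy
    exact neg_lt_neg (hnew x y (by omega) hxy (by omega))

/-- A finite set on which an injective function has no increasing subsequence of length `k + 1`
contains a decreasing subsequence of at least a `1 / k` fraction of its elements. -/
lemma exists_strictAntiOn_of_forall_strictMonoOn (s : ℕ → ℝ) (k : ℕ) (W : Finset ℕ)
    (hs : InjOn s W) (h : ∀ A ⊆ W, StrictMonoOn s A → A.card ≤ k) :
    ∃ D ⊆ W, StrictAntiOn s D ∧ W.card ≤ k * D.card := by
  classical
  induction k generalizing W with
  | zero =>
    refine ⟨∅, by simp, by simp [StrictAntiOn], ?_⟩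
    rcases W.eq_empty_or_nonempty with rfl | ⟨x, hx⟩
    · simp
    · simpa using h {x} (by simpa using hx) (by simp [StrictMonoOn])
  | succ k ih =>
    set M := W.filter fun i => ∀ j ∈ W, j < i → s i < s j with hM
    have hMW : M ⊆ W := Finset.filter_subset _ _
    obtain ⟨D, hDW, hD, hcard⟩ := ih (W \ M) (hs.mono (by simp)) <| by
      intro A hA hAs
      rcases A.eq_empty_or_nonempty with rfl | hne
      · simp
      set x := A.min' hne
      have hxA : x ∈ A := A.min'_mem hne
      obtain ⟨hxW, hxM⟩ := Finset.mem_sdiff.1 (hA hxA)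
      obtain ⟨j, hj, hjx, hsj⟩ : ∃ j ∈ W, j < x ∧ s j ≤ s x := by
        simpa [hM, hxW] using hxM
      have hsj' : s j < s x := hsj.lt_of_ne fun e => hjx.ne (hs hj hxW e)
      have hmin : ∀ y ∈ A, x ≤ y := fun y hy => A.min'_le y hy
      have hjA : j ∉ A := fun hjA => (hmin j hjA).not_gt hjx
      have := h (insert j A) (Finset.insert_subset hj (hA.trans Finset.sdiff_subset)) <| by
        intro y hy z hz hyz
        simp only [Finset.coe_insert, mem_insert_iff, Finset.mem_coe] at hy hz
        rcases hy with rfl | hy <;> rcases hz with rfl | hz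
        · omega
        · exact hsj'.trans_le (hAs.monotoneOn hxA hz (hmin z hz))
        · have := hmin y hy
          omega
        · exact hAs hy hz hyz
      rw [Finset.card_insert_of_notMem hjA] at this
      omega
    have hsum : (W \ M).card + M.card = W.card := Finset.card_sdiff_add_card_eq_card hMW
    have hManti : StrictAntiOn s M := fun x hx y hy hxy =>
      (Finset.mem_filter.1 hy).2 x (hMW hx) hxy
    rcases le_total D.card M.card with hle | hle
    · refine ⟨M, hMW, hManti, ?_⟩
      nlinarith
    · refine ⟨D, hDW.trans Finset.sdiff_subset, hD, ?_⟩
      nlinarith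

lemma exists_hasIncreasing_neg {s : ℕ → ℝ} {k n N N' : ℕ} (hs : InjOn s (Iio n))
    (hn : N' ≤ n) (h : ¬ HasIncreasing s N N' (k + 1)) :
    ∃ q, HasIncreasing (-s) N N' q ∧ N' - N ≤ k * q := by
  obtain ⟨D, hDW, hD, hcard⟩ := exists_strictAntiOn_of_forall_strictMonoOn s k (Finset.Ico N N')
    (hs.mono fun x hx => by simp only [Finset.coe_Ico, mem_Ico, mem_Iio] at *; omega) <| by
      intro A hA hAs
      by_contra! hlt
      obtain ⟨B, hBA, hB⟩ := Finset.exists_subset_card_eq hlt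
      exact h ⟨B, hBA.trans hA, hB, hAs.mono (by simpa using hBA)⟩
  exact ⟨D.card, ⟨D, hDW, rfl, hD.neg⟩, by simpa using hcard⟩

/-- The pairs of subsequences kept by the greedy construction: one with a descending end and one
with an ascending end, of total length at least `N / k`. -/
def HasPair (s : ℕ → ℝ) (k N : ℕ) : Prop :=
  ∃ a b, HasDescendingEnd s (k + 1) N a ∧ HasDescendingEnd (-s) (k + 1) N b ∧ N ≤ (a + b) * k

lemma HasPair.neg {s : ℕ → ℝ} {k N : ℕ} (h : HasPair s k N) : HasPair (-s) k N := by
  obtain ⟨a, b, ha, hb, hN⟩ := h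
  exact ⟨b, a, hb, by rwa [neg_neg], by rwa [add_comm]⟩

lemma InjOn.neg_real {s : ℕ → ℝ} {S : Set ℕ} (hs : InjOn s S) : InjOn (-s) S :=
  fun _ hx _ hy h => hs hx hy (neg_injective h)

lemma HasPair.step {s : ℕ → ℝ} {k n N N' : ℕ} (hs : InjOn s (Iio n)) (hk : 1 ≤ k)
    (h : HasPair s k N) (hN : N ≤ N') (hn : N' + 1 ≤ n)
    (hinc : HasIncreasing s N (N' + 1) (k + 1)) (hdec : HasIncreasing (-s) N (N' + 1) (k + 1))
    (hno : ¬ HasIncreasing s N N' (k + 1)) : HasPair s k (N' + 1) := by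
  obtain ⟨a, b, ha, hb, hab⟩ := h
  obtain ⟨q₀, hq₀, hcard⟩ := exists_hasIncreasing_neg hs (by omega) hno
  obtain ⟨q, hq, hkq, hle⟩ : ∃ q, HasIncreasing (-s) N (N' + 1) q ∧ k + 1 ≤ q ∧ q₀ ≤ q := by
    rcases le_total (k + 1) q₀ with h | h
    · exact ⟨q₀, hq₀.mono (by omega), h, le_rfl⟩
    · exact ⟨k + 1, hdec, le_rfl, h⟩
  have hb' := hb.append (InjOn.neg_real hs) hq (by omega) hkq (by omega) hn
  rw [neg_neg] at hb'
  refine ⟨b + q, a + (k + 1), hb',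
    ha.append hs hinc (by omega) le_rfl (by omega) hn, ?_⟩
  have h₁ : N' - N ≤ k * q := hcard.trans (Nat.mul_le_mul_left k hle)
  have h₂ : N' ≤ (a + b) * k + k * q := by omega
  nlinarith

lemma HasDescendingEnd.mono {s : ℕ → ℝ} {k N N' m : ℕ} (h : HasDescendingEnd s k N m)
    (hN : N ≤ N') : HasDescendingEnd s k N' m := by
  obtain ⟨f, hf, hfN, h⟩ := h
  exact ⟨f, hf, fun i hi => (hfN i hi).trans_le hN, h⟩

lemma exists_long_of_not_hasIncreasing {s : ℕ → ℝ} {k n N : ℕ} (hs : InjOn s (Iio n))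
    (h : HasPair s k N) (hN : N ≤ n) (hn : k ^ 2 + 1 ≤ n)
    (hno : ¬ HasIncreasing s N n (k + 1)) :
    ∃ m, k + 1 ≤ m ∧ (HasDescendingEnd s (k + 1) n m ∨ HasDescendingEnd (-s) (k + 1) n m) ∧
      n ≤ 2 * m * k + k ^ 2 := by
  obtain ⟨a, b, ha, hb, hab⟩ := h
  obtain ⟨q, hq, hcard⟩ := exists_hasIncreasing_neg hs le_rfl hno
  rcases Nat.lt_or_ge k q with hkq | hkq
  · have hb' := hb.append (InjOn.neg_real hs) hq (by omega) hkq hN le_rfl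
    rw [neg_neg] at hb'
    have h₁ : n ≤ (a + b) * k + k * q := by omega
    rcases le_total a (b + q) with hle | hle
    · exact ⟨b + q, by omega, Or.inl hb', by nlinarith⟩
    · exact ⟨a, by omega, Or.inl (ha.mono hN), by nlinarith⟩
  · have h₁ : n ≤ (a + b) * k + k * q := by omega
    have h₂ : n ≤ (a + b) * k + k ^ 2 := by nlinarith
    have hpos : 0 < a + b := by
      by_contra! h0
      obtain rfl : a = 0 := by omega
      obtain rfl : b = 0 := by omega
      omega
    rcases le_total a b with hle | hle
    · exact ⟨b, hb.le (by omega), Or.inr (hb.mono hN), by nlinarith⟩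
    · exact ⟨a, ha.le (by omega), Or.inl (ha.mono hN), by nlinarith⟩

lemma exists_long_covered {s : ℕ → ℝ} {k n : ℕ} (hs : InjOn s (Iio n)) (hk : 1 ≤ k)
    (hn : k ^ 2 + 1 ≤ n) :
    ∃ m, k + 1 ≤ m ∧ (HasDescendingEnd s (k + 1) n m ∨ HasDescendingEnd (-s) (k + 1) n m) ∧
      n ≤ 2 * m * k + k ^ 2 := by
  classical
  have h0 : HasPair s k 0 :=
    ⟨0, 0, hasDescendingEnd_zero _ _ _, hasDescendingEnd_zero _ _ _, by simp⟩
  set N := Nat.findGreatest (HasPair s k) n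
  have hN : HasPair s k N := Nat.findGreatest_spec (Nat.zero_le n) h0
  have hNn : N ≤ n := Nat.findGreatest_le n
  by_cases hinc : HasIncreasing s N n (k + 1)
  · by_cases hdec : HasIncreasing (-s) N n (k + 1)
    · exfalso
      have hex : ∃ N', HasIncreasing s N N' (k + 1) ∧ HasIncreasing (-s) N N' (k + 1) :=
        ⟨n, hinc, hdec⟩
      obtain ⟨hi, hd⟩ := Nat.find_spec hex
      have hle : Nat.find hex ≤ n := Nat.find_min' hex ⟨hinc, hdec⟩
      have hlt : N < Nat.find hex := by
        obtain ⟨A, hA, hcard, -⟩ := hi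
        have := Finset.card_le_card hA
        rw [Nat.card_Ico] at this
        omega
      have hmin := Nat.find_min hex (m := Nat.find hex - 1) (by omega)
      obtain ⟨N', hN'⟩ : ∃ N', Nat.find hex = N' + 1 := ⟨Nat.find hex - 1, by omega⟩
      rw [hN'] at hi hd hle hlt hmin
      rw [Nat.add_sub_cancel, not_and_or] at hmin
      have hstep : HasPair s k (N' + 1) := by
        rcases hmin with hno | hno
        · exact hN.step hs hk (by omega) hle hi hd hno
        · simpa using hN.neg.step (InjOn.neg_real hs) hk (by omega) hle hd (by rwa [neg_neg]) hno
            |>.neg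
      exact (Nat.le_findGreatest hle hstep).not_gt hlt
    · obtain ⟨m, hm, h, hle⟩ :=
        exists_long_of_not_hasIncreasing (InjOn.neg_real hs) hN.neg hNn hn hdec
      rw [neg_neg] at h
      exact ⟨m, hm, h.symm, hle⟩
  · exact exists_long_of_not_hasIncreasing hs hN hNn hn hinc

lemma MonotoneBlock.union {t : ℕ → ℝ} {a b c d i : ℕ} (h : MonotoneBlock t a b)
    (h' : MonotoneBlock t c d) (ha : a ≤ i) (hb : i + 1 ≤ b) (hc : c ≤ i) (hd : i + 1 ≤ d) :
    MonotoneBlock t (min a c) (max b d) := by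
  have hab : i ∈ Icc a b ∧ i + 1 ∈ Icc a b := by simp only [mem_Icc]; omega
  have hcd : i ∈ Icc c d ∧ i + 1 ∈ Icc c d := by simp only [mem_Icc]; omega
  have glue : ∀ u : ℕ → ℝ, StrictMonoOn u (Icc a b) → StrictMonoOn u (Icc c d) →
      StrictMonoOn u (Icc (min a c) (max b d)) := by
    intro u h h'
    have hle : StrictMonoOn u (Icc (min a c) i) := by
      rcases le_total a c with hac | hac
      · rw [min_eq_left hac]
        exact h.mono (Icc_subset_Icc_right (by omega))
      · rw [min_eq_right hac]
        exact h'.mono (Icc_subset_Icc_right (by omega))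
    have hge : StrictMonoOn u (Icc i (max b d)) := by
      rcases le_total b d with hbd | hbd
      · rw [max_eq_right hbd]
        exact h'.mono (Icc_subset_Icc_left (by omega))
      · rw [max_eq_left hbd]
        exact h.mono (Icc_subset_Icc_left (by omega))
    have := hle.union hge (c := i) ⟨⟨by omega, le_rfl⟩, fun x hx => hx.2⟩
      ⟨⟨le_rfl, by omega⟩, fun x hx => hx.1⟩
    rwa [Icc_union_Icc_eq_Icc (by omega) (by omega)] at this
  rcases h with h | h <;> rcases h' with h' | h'
  · exact Or.inl (glue t h h')
  · exact absurd (h hab.1 hab.2 (Nat.lt_succ_self i))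
      (h' hcd.1 hcd.2 (Nat.lt_succ_self i)).not_gt
  · exact absurd (h' hcd.1 hcd.2 (Nat.lt_succ_self i))
      (h hab.1 hab.2 (Nat.lt_succ_self i)).not_gt
  · refine Or.inr fun x hx y hy hxy => neg_lt_neg_iff.1 (glue (-t) h.neg h'.neg hx hy hxy)

lemma isKRollercoaster_of_coveredByBlocks {k m : ℕ} {t : ℕ → ℝ} (hk : 2 ≤ k) (hm : k ≤ m)
    (hinj : InjOn t (Iio m)) (ht : CoveredByBlocks k m t) :
    IsKRollercoaster k (fun i : Fin m => t i) := by
  refine ⟨hm, fun i j h => Fin.ext (hinj i.2 j.2 h), ?_⟩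
  rintro ⟨i, hi⟩ ⟨j, hj⟩ ⟨hij, hmono, hmax⟩
  rw [Fin.mk_le_mk] at hij
  have hto : MonotoneBlock t i j := by
    refine hmono.imp (fun h x hx y hy hxy => ?_) (fun h x hx y hy hxy => ?_) <;>
    exact h (a := ⟨x, hx.2.trans_lt hj⟩) hx (b := ⟨y, hy.2.trans_lt hj⟩) hy hxy
  have hmax' : ∀ a b, a ≤ i → j ≤ b → b < m → MonotoneBlock t a b → a = i ∧ b = j := by
    intro a b ha hb hbm hab
    by_contra hne
    refine hmax ⟨a, by omega⟩ ⟨b, hbm⟩ ha hb ?_ ?_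
    · simp only [ne_eq, Fin.mk.injEq]
      omega
    · exact hab.imp (fun h x hx y hy hxy => h hx hy hxy) (fun h x hx y hy hxy => h hx hy hxy)
  rcases hij.eq_or_lt with rfl | hlt
  · obtain ⟨p, hp, hpi, hip⟩ : ∃ p, p + 1 < m ∧ p ≤ i ∧ i ≤ p + 1 := by
      rcases Nat.lt_or_ge (i + 1) m with h | h
      · exact ⟨i, h, le_rfl, by omega⟩
      · exact ⟨i - 1, by omega, by omega, by omega⟩
    obtain ⟨a, b, h₁, h₂, h₃, h₄, h₅⟩ := ht p hp
    have := hmax' a b (by omega) (by omega) h₃ h₅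
    omega
  · obtain ⟨a, b, h₁, h₂, h₃, h₄, h₅⟩ := ht i (by omega)
    have := hmax' (min i a) (max j b) (by omega) (by omega) (by omega)
      (hto.union h₅ le_rfl hlt h₁ h₂)
    simp only
    omega

lemma CoveredByBlocks.of_neg {k m : ℕ} {t : ℕ → ℝ} (h : CoveredByBlocks k m (-t)) :
    CoveredByBlocks k m t := by
  intro i hi
  obtain ⟨a, b, h₁, h₂, h₃, h₄, h₅⟩ := h i hi
  refine ⟨a, b, h₁, h₂, h₃, h₄, h₅.symm.imp (fun h => ?_) (fun h => ?_)⟩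
  · simpa using h.neg
  · simpa using h.neg

/-- For every integer `k ≥ 4`, every sequence of `n ≥ (k-1)² + 1` distinct
real numbers contains a `k`-rollercoaster subsequence of length at least
`n/(2(k-1)) − 3k/2`. -/
theorem statement7 (k : ℕ) (hk : 4 ≤ k) (n : ℕ) (hn : (k - 1) ^ 2 + 1 ≤ n)
    (s : Fin n → ℝ) (hs : Function.Injective s) :
    ∃ (m : ℕ) (f : Fin m → Fin n), StrictMono f ∧ IsKRollercoaster k (s ∘ f) ∧
      (n : ℝ) / (2 * ((k : ℝ) - 1)) - 3 * (k : ℝ) / 2 ≤ (m : ℝ) := by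
  obtain ⟨l, rfl⟩ : ∃ l, k = l + 1 := ⟨k - 1, by omega⟩
  rw [Nat.add_sub_cancel] at hn
  set u : ℕ → ℝ := fun i => if h : i < n then s ⟨i, h⟩ else 0 with hu
  have hus : ∀ i (h : i < n), u i = s ⟨i, h⟩ := fun i h => by simp [hu, h]
  have hinj : InjOn u (Iio n) := by
    intro i hi j hj h
    rw [hus i hi, hus j hj] at h
    exact congrArg Fin.val (hs h)
  obtain ⟨m, hm, h, hle⟩ := exists_long_covered hinj (by omega) hn
  obtain ⟨f, hf, hfn, hcov⟩ : ∃ f : ℕ → ℕ, StrictMonoOn f (Iio m) ∧ (∀ i < m, f i < n) ∧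
      CoveredByBlocks (l + 1) m (u ∘ f) := by
    rcases h with ⟨f, hf, hfn, hcov, -⟩ | ⟨f, hf, hfn, hcov, -⟩
    · exact ⟨f, hf, hfn, hcov⟩
    · exact ⟨f, hf, hfn, hcov.of_neg⟩
  refine ⟨m, fun i => ⟨f i, hfn i i.2⟩, fun i j hij => hf i.2 j.2 hij, ?_, ?_⟩
  · have := isKRollercoaster_of_coveredByBlocks (by omega) hm
      (hinj.comp hf.injOn fun i hi => hfn i hi) hcov
    convert this using 2 with i
    exact (hus _ _).symm
  · have hle' : (n : ℝ) ≤ 2 * m * l + l ^ 2 := by exact_mod_cast hle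
    have hl : (3 : ℝ) ≤ l := by
      have : 3 ≤ l := by omega
      exact_mod_cast this
    push_cast
    rw [add_sub_cancel_right, sub_le_iff_le_add, div_le_iff₀ (by linarith)]
    nlinarith
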